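/- arXiv:1705.08074 — 2 statements merged into one kernel-verified Lean document; each statement's English description precedes it below -/
import Mathlib

section
/- For every block array s, one has c_{s11} = tr(B_t F_s'B̃F_s) > 0 and 1_t'F_s'B̃F_s1_t > 0. -/
open Matrix

namespace TwoDim

/-- The set of plots of an `a × b` block. -/
abbrev Plot (a b : ℕ) := Fin a × Fin b

/-- A block array: an assignment of one of `t` treatments to each plot. -/
abbrev BlockArray (a b t : ℕ) := Plot a b → Fin t

/-- The all-ones matrix. -/
def Jmat (n : Type*) : Matrix n n ℝ := Matrix.of fun _ _ => 1

/-- `B_m = I - J/m`. -/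
noncomputable def Bmat (n : Type*) [Fintype n] [DecidableEq n] : Matrix n n ℝ :=
  1 - ((Fintype.card n : ℝ))⁻¹ • Jmat n

variable {a b t : ℕ}

/-- The treatment incidence matrix `T_s`. -/
def Tmat (s : BlockArray a b t) : Matrix (Plot a b) (Fin t) ℝ :=
  Matrix.of fun q k => if s q = k then 1 else 0

/-- Two plots are neighbors if they agree in one coordinate and differ by 1 in the other. -/
def Neighbor (q r : Plot a b) : Prop :=
  (q.1 = r.1 ∧ (q.2.val + 1 = r.2.val ∨ r.2.val + 1 = q.2.val)) ∨
  (q.2 = r.2 ∧ (q.1.val + 1 = r.1.val ∨ r.1.val + 1 = q.1.val))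

instance (q r : Plot a b) : Decidable (Neighbor q r) := by
  unfold Neighbor; infer_instance

/-- The adjacency matrix of the neighbor relation. -/
def Mmat (a b : ℕ) : Matrix (Plot a b) (Plot a b) ℝ :=
  Matrix.of fun q r => if Neighbor q r then 1 else 0

/-- `F_s = M T_s`. -/
def Fmat (s : BlockArray a b t) : Matrix (Plot a b) (Fin t) ℝ :=
  Mmat a b * Tmat s

/-- `B̃ = Σ⁻¹ − Σ⁻¹ J Σ⁻¹ / (1'Σ⁻¹1)`. -/
noncomputable def Btilde (Sig : Matrix (Plot a b) (Plot a b) ℝ) :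
    Matrix (Plot a b) (Plot a b) ℝ :=
  Sig⁻¹ - (∑ i, ∑ j, Sig⁻¹ i j)⁻¹ • (Sig⁻¹ * Jmat (Plot a b) * Sig⁻¹)

/-- `C_{s00} = T_s' W T_s` (with `W` playing the role of `B̃`). -/
def Cs00 (W : Matrix (Plot a b) (Plot a b) ℝ) (s : BlockArray a b t) :
    Matrix (Fin t) (Fin t) ℝ := (Tmat s)ᵀ * W * Tmat s

/-- `C_{s01} = T_s' W F_s`. -/
def Cs01 (W : Matrix (Plot a b) (Plot a b) ℝ) (s : BlockArray a b t) :
    Matrix (Fin t) (Fin t) ℝ := (Tmat s)ᵀ * W * Fmat s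

/-- `C_{s11} = F_s' W F_s`. -/
def Cs11 (W : Matrix (Plot a b) (Plot a b) ℝ) (s : BlockArray a b t) :
    Matrix (Fin t) (Fin t) ℝ := (Fmat s)ᵀ * W * Fmat s

/-- `c_{s00} = tr(B_t C_{s00})`. -/
noncomputable def cs00 (W : Matrix (Plot a b) (Plot a b) ℝ) (s : BlockArray a b t) : ℝ :=
  Matrix.trace (Bmat (Fin t) * Cs00 W s)

noncomputable def cs01 (W : Matrix (Plot a b) (Plot a b) ℝ) (s : BlockArray a b t) : ℝ :=
  Matrix.trace (Bmat (Fin t) * Cs01 W s)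

noncomputable def cs11 (W : Matrix (Plot a b) (Plot a b) ℝ) (s : BlockArray a b t) : ℝ :=
  Matrix.trace (Bmat (Fin t) * Cs11 W s)

/-- The quadratic `q_s(x) = c_{s00} + 2 c_{s01} x + c_{s11} x²`. -/
noncomputable def qpoly (W : Matrix (Plot a b) (Plot a b) ℝ) (s : BlockArray a b t) (x : ℝ) : ℝ :=
  cs00 W s + 2 * cs01 W s * x + cs11 W s * x ^ 2

/-- A measure on the set of block arrays: nonnegative weights summing to one. -/
def IsMeasure (ξ : BlockArray a b t → ℝ) : Prop :=
  (∀ s, 0 ≤ ξ s) ∧ ∑ s, ξ s = 1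

noncomputable def Cm00 (W : Matrix (Plot a b) (Plot a b) ℝ) (ξ : BlockArray a b t → ℝ) :
    Matrix (Fin t) (Fin t) ℝ := ∑ s, ξ s • Cs00 W s

noncomputable def Cm01 (W : Matrix (Plot a b) (Plot a b) ℝ) (ξ : BlockArray a b t → ℝ) :
    Matrix (Fin t) (Fin t) ℝ := ∑ s, ξ s • Cs01 W s

noncomputable def Cm11 (W : Matrix (Plot a b) (Plot a b) ℝ) (ξ : BlockArray a b t → ℝ) :
    Matrix (Fin t) (Fin t) ℝ := ∑ s, ξ s • Cs11 W s

noncomputable def cm00 (W : Matrix (Plot a b) (Plot a b) ℝ) (ξ : BlockArray a b t → ℝ) : ℝ :=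
  ∑ s, ξ s * cs00 W s

noncomputable def cm01 (W : Matrix (Plot a b) (Plot a b) ℝ) (ξ : BlockArray a b t → ℝ) : ℝ :=
  ∑ s, ξ s * cs01 W s

noncomputable def cm11 (W : Matrix (Plot a b) (Plot a b) ℝ) (ξ : BlockArray a b t → ℝ) : ℝ :=
  ∑ s, ξ s * cs11 W s

/-- `q*_ξ = c_{ξ00} − c_{ξ01}²/c_{ξ11}`. -/
noncomputable def qstar (W : Matrix (Plot a b) (Plot a b) ℝ) (ξ : BlockArray a b t → ℝ) : ℝ :=
  cm00 W ξ - (cm01 W ξ) ^ 2 / cm11 W ξ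

/-- `G` is a generalized inverse of `A`. -/
def IsGenInv (A G : Matrix (Fin t) (Fin t) ℝ) : Prop := A * G * A = A

/-- Information matrix `C_{ξ00} − C_{ξ01} G C_{ξ10}` computed with a generalized inverse `G`. -/
noncomputable def InfoMat (W : Matrix (Plot a b) (Plot a b) ℝ) (ξ : BlockArray a b t → ℝ)
    (G : Matrix (Fin t) (Fin t) ℝ) : Matrix (Fin t) (Fin t) ℝ :=
  Cm00 W ξ - Cm01 W ξ * G * (Cm01 W ξ)ᵀ

/-- A criterion `Φ` on `t×t` real symmetric matrices: concave, Loewner-nondecreasing, and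
invariant under simultaneous permutations of rows and columns. -/
def GoodPhi (t : ℕ) (Φ : Matrix (Fin t) (Fin t) ℝ → ℝ) : Prop :=
  (∀ A B : Matrix (Fin t) (Fin t) ℝ, A.IsSymm → B.IsSymm → ∀ α : ℝ, 0 ≤ α → α ≤ 1 →
      α * Φ A + (1 - α) * Φ B ≤ Φ (α • A + (1 - α) • B)) ∧
  (∀ A B : Matrix (Fin t) (Fin t) ℝ, A.IsSymm → B.IsSymm → (B - A).PosSemidef → Φ A ≤ Φ B) ∧
  (∀ (σ : Equiv.Perm (Fin t)) (C : Matrix (Fin t) (Fin t) ℝ), Φ (C.submatrix σ σ) = Φ C)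

/-- Universal optimality of a measure `ξ`. -/
def UnivOptimal (W : Matrix (Plot a b) (Plot a b) ℝ) (ξ : BlockArray a b t → ℝ) : Prop :=
  ∀ η : BlockArray a b t → ℝ, IsMeasure η →
    ∀ G H : Matrix (Fin t) (Fin t) ℝ, IsGenInv (Cm11 W ξ) G → IsGenInv (Cm11 W η) H →
      ∀ Φ : Matrix (Fin t) (Fin t) ℝ → ℝ, GoodPhi t Φ →
        Φ (InfoMat W η H) ≤ Φ (InfoMat W ξ G)

/-- A measure is symmetric if it is invariant under relabeling of the treatments. -/
def IsSymmetricMeasure (ξ : BlockArray a b t → ℝ) : Prop :=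
  ∀ (σ : Equiv.Perm (Fin t)) (s : BlockArray a b t), ξ (fun q => σ (s q)) = ξ s

/-- A matrix is completely symmetric if it is of the form `αI + βJ`. -/
def ComplSym (A : Matrix (Fin t) (Fin t) ℝ) : Prop :=
  ∃ α β : ℝ, A = α • (1 : Matrix (Fin t) (Fin t) ℝ) + β • Jmat (Fin t)

/-- A measure is pseudo symmetric if `C_{ξ00}`, `C_{ξ01}`, `C_{ξ11}` are completely symmetric. -/
def PseudoSym (W : Matrix (Plot a b) (Plot a b) ℝ) (ξ : BlockArray a b t → ℝ) : Prop :=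
  ComplSym (Cm00 W ξ) ∧ ComplSym (Cm01 W ξ) ∧ ComplSym (Cm11 W ξ)

/-- `r(x) = max_{s∈S} q_s(x)`. -/
noncomputable def rfun {a b : ℕ} (t : ℕ) (W : Matrix (Plot a b) (Plot a b) ℝ) (x : ℝ) : ℝ :=
  sSup (Set.range fun s : BlockArray a b t => qpoly W s x)

/-- `min_{s∈S} q_s(x)`. -/
noncomputable def rmin {a b : ℕ} (t : ℕ) (W : Matrix (Plot a b) (Plot a b) ℝ) (x : ℝ) : ℝ :=
  sInf (Set.range fun s : BlockArray a b t => qpoly W s x)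

/-- Number of plots assigned treatment `k` by `s`. -/
noncomputable def f0 (s : BlockArray a b t) (k : Fin t) : ℕ :=
  {q : Plot a b | s q = k}.ncard

/-- Replications of `k` among the columns `1,…,b−1`. -/
noncomputable def f1 (s : BlockArray a b t) (k : Fin t) : ℕ :=
  {q : Plot a b | s q = k ∧ q.2.val + 1 < b}.ncard

/-- Replications of `k` among the columns `2,…,b`. -/
noncomputable def f2 (s : BlockArray a b t) (k : Fin t) : ℕ :=
  {q : Plot a b | s q = k ∧ 1 ≤ q.2.val}.ncard

/-- Replications of `k` among the rows `1,…,a−1`. -/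
noncomputable def f3 (s : BlockArray a b t) (k : Fin t) : ℕ :=
  {q : Plot a b | s q = k ∧ q.1.val + 1 < a}.ncard

/-- Replications of `k` among the rows `2,…,a`. -/
noncomputable def f4 (s : BlockArray a b t) (k : Fin t) : ℕ :=
  {q : Plot a b | s q = k ∧ 1 ≤ q.1.val}.ncard

noncomputable def fc (s : BlockArray a b t) : ℕ → Fin t → ℕ
  | 0 => f0 s
  | 1 => f1 s
  | 2 => f2 s
  | 3 => f3 s
  | 4 => f4 s
  | _ => fun _ => 0

/-- `h^{uv}_s = Σ_k f^u_{s,k} f^v_{s,k}`. -/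
noncomputable def hval (s : BlockArray a b t) (u v : ℕ) : ℝ :=
  ∑ k : Fin t, (fc s u k : ℝ) * (fc s v k : ℝ)

noncomputable def h00 (s : BlockArray a b t) : ℝ := hval s 0 0

noncomputable def h1 (s : BlockArray a b t) : ℝ :=
  hval s 0 1 + hval s 0 2 + hval s 0 3 + hval s 0 4

noncomputable def h2 (s : BlockArray a b t) : ℝ :=
  hval s 1 1 + hval s 2 2 + hval s 3 3 + hval s 4 4

noncomputable def h3 (s : BlockArray a b t) : ℝ :=
  hval s 1 2 + hval s 1 3 + hval s 1 4 + hval s 2 3 + hval s 2 4 + hval s 3 4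

/-- `z¹_{s,r}`: horizontally adjacent pairs of plots receiving the same treatment. -/
noncomputable def zr1 (s : BlockArray a b t) : ℕ :=
  {qr : Plot a b × Plot a b |
    qr.1.1 = qr.2.1 ∧ qr.1.2.val + 1 = qr.2.2.val ∧ s qr.1 = s qr.2}.ncard

noncomputable def zr2 (s : BlockArray a b t) : ℕ :=
  {qr : Plot a b × Plot a b |
    qr.1.1 = qr.2.1 ∧ qr.1.2.val + 2 = qr.2.2.val ∧ s qr.1 = s qr.2}.ncard

noncomputable def zc1 (s : BlockArray a b t) : ℕ :=
  {qr : Plot a b × Plot a b |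
    qr.1.2 = qr.2.2 ∧ qr.1.1.val + 1 = qr.2.1.val ∧ s qr.1 = s qr.2}.ncard

noncomputable def zc2 (s : BlockArray a b t) : ℕ :=
  {qr : Plot a b × Plot a b |
    qr.1.2 = qr.2.2 ∧ qr.1.1.val + 2 = qr.2.1.val ∧ s qr.1 = s qr.2}.ncard

/-- pairs `(i,j)`, `(i−1,j+1)` with the same treatment. -/
noncomputable def zd1 (s : BlockArray a b t) : ℕ :=
  {qr : Plot a b × Plot a b |
    qr.2.1.val + 1 = qr.1.1.val ∧ qr.1.2.val + 1 = qr.2.2.val ∧ s qr.1 = s qr.2}.ncard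

/-- pairs `(i,j)`, `(i+1,j+1)` with the same treatment. -/
noncomputable def zd2 (s : BlockArray a b t) : ℕ :=
  {qr : Plot a b × Plot a b |
    qr.1.1.val + 1 = qr.2.1.val ∧ qr.1.2.val + 1 = qr.2.2.val ∧ s qr.1 = s qr.2}.ncard

noncomputable def z1 (s : BlockArray a b t) : ℝ := 2 * zr1 s + 2 * zc1 s

noncomputable def z2 (s : BlockArray a b t) : ℝ :=
  2 * zr2 s + 2 * zc2 s + 4 * zd1 s + 4 * zd2 s

/-- `η = 4p − 2a − 2b − 2(8ab − 7a − 7b + 4)/t + 4(2p − a − b)²/(pt)` where `p = ab`. -/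
noncomputable def eta (a b t : ℕ) : ℝ :=
  4 * ((a : ℝ) * b) - 2 * a - 2 * b - 2 * (8 * (a : ℝ) * b - 7 * a - 7 * b + 4) / t +
    4 * (2 * (a : ℝ) * b - a - b) ^ 2 / (((a : ℝ) * b) * t)

/-- A corner plot of the `a × b` block. -/
def IsCorner (q : Plot a b) : Prop :=
  (q.1.val = 0 ∨ q.1.val + 1 = a) ∧ (q.2.val = 0 ∨ q.2.val + 1 = b)

/-- Treatment `k` is significant in `s`: it occupies exactly two plots, which are
neighbors, at least one of them being a corner plot. -/
def Significant (s : BlockArray a b t) (k : Fin t) : Prop :=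
  ∃ u v : Plot a b, u ≠ v ∧ {q : Plot a b | s q = k} = {u, v} ∧
    Neighbor u v ∧ (IsCorner u ∨ IsCorner v)

/-- Treatment `k` is strictly significant in `s`: both of its two plots are corners. -/
def StrictSignificant (s : BlockArray a b t) (k : Fin t) : Prop :=
  ∃ u v : Plot a b, u ≠ v ∧ {q : Plot a b | s q = k} = {u, v} ∧
    Neighbor u v ∧ IsCorner u ∧ IsCorner v

/-- `Q_i`: block arrays with exactly `i` significant treatments in which every other
treatment appears at most once. -/
def Qset (a b t : ℕ) (i : ℕ) : Set (BlockArray a b t) :=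
  {s | {k : Fin t | Significant s k}.ncard = i ∧
       ∀ k : Fin t, ¬ Significant s k → f0 s k ≤ 1}

/-- `Q_j*`: members of `Q_j` whose significant treatments are all strictly significant. -/
def QsetStar (a b t : ℕ) (j : ℕ) : Set (BlockArray a b t) :=
  {s | s ∈ Qset a b t j ∧ ∀ k : Fin t, Significant s k → StrictSignificant s k}

/-- Treatment `k` is connected in `s`. -/
def ConnectedIn (s : BlockArray a b t) (k : Fin t) : Prop :=
  ∀ q r : Plot a b, s q = k → s r = k →
    Relation.ReflTransGen (fun u v => Neighbor u v ∧ s u = k ∧ s v = k) q r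

/-!
By the strict Cauchy–Schwarz inequality for the form `Σ⁻¹`, the quadratic form of `B̃` is positive
at every nonconstant vector. Both quantities are values of this form: `1'F'B̃F1` at the vector `F1`
of numbers of neighbors, and, since `B_t` is a symmetric idempotent, `tr(B_t F'B̃F)` summed over the
columns of `F B_t`. A corner plot and the next plot in its row have numbers of neighbors differing
by one, so `F1` is not constant. If column `k` of `F B_t` agreed at these two plots, the counts
`F_{qk}` there would differ by `1/t`, which is not an integer.
-/

section Quadratic

theorem linearIndependent_one_of_apply_ne {n : Type*} {v : n → ℝ} {q r : n} (h : v q ≠ v r) :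
    LinearIndependent ℝ ![1, v] := by
  have : Nonempty n := ⟨q⟩
  refine (LinearIndependent.pair_iff' one_ne_zero).2 fun c hc => h ?_
  simp [← hc]

variable {n m : Type*} [Fintype n] [Fintype m]

theorem dotProduct_mulVec_mul_lt_of_posDef {P : Matrix n n ℝ} (hP : P.PosDef) {u v : n → ℝ}
    (h : LinearIndependent ℝ ![u, v]) :
    (u ⬝ᵥ P *ᵥ v) * (v ⬝ᵥ P *ᵥ u) < (u ⬝ᵥ P *ᵥ u) * (v ⬝ᵥ P *ᵥ v) := by
  classical
  simpa only [toLinearMap₂'_apply'] using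
    (LinearMap.BilinForm.apply_mul_apply_lt_iff_linearIndependent (Matrix.toLinearMap₂' ℝ P)
      (fun x hx => by
        simpa only [toLinearMap₂'_apply', star_trivial] using hP.dotProduct_mulVec_pos hx)
      u v).2 h

theorem Jmat_eq_vecMulVec (n : Type*) : Jmat n = vecMulVec 1 1 := by
  ext i j
  simp [Jmat, vecMulVec_apply]

theorem sum_sum_eq_one_dotProduct_mulVec_one {R : Type*} [NonAssocSemiring R]
    (A : Matrix n n R) : ∑ i, ∑ j, A i j = 1 ⬝ᵥ A *ᵥ 1 := by
  simp [dotProduct, mulVec]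

theorem dotProduct_mul_Jmat_mul_mulVec (P : Matrix n n ℝ) (v : n → ℝ) :
    v ⬝ᵥ (P * Jmat n * P) *ᵥ v = (1 ⬝ᵥ P *ᵥ v) * (v ⬝ᵥ P *ᵥ 1) := by
  rw [Jmat_eq_vecMulVec, ← mulVec_mulVec, ← mulVec_mulVec, vecMulVec_mulVec, op_smul_eq_smul,
    mulVec_smul, dotProduct_smul, smul_eq_mul]

theorem dotProduct_transpose_mul_mul_mulVec {R : Type*} [CommSemiring R] (W : Matrix n n R)
    (F : Matrix n m R) (x : m → R) :
    x ⬝ᵥ (Fᵀ * W * F) *ᵥ x = (F *ᵥ x) ⬝ᵥ W *ᵥ (F *ᵥ x) := by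
  rw [← mulVec_mulVec, ← mulVec_mulVec, dotProduct_mulVec, vecMul_transpose]

/-- The quadratic form of `W` is positive at every nonconstant vector; this is how positive
definiteness of `Σ` survives in `B̃`, whose quadratic form vanishes on constants. No condition is
imposed on constant vectors. -/
def PosOffConstants (W : Matrix n n ℝ) : Prop :=
  ∀ ⦃v : n → ℝ⦄ ⦃q r : n⦄, v q ≠ v r → 0 < v ⬝ᵥ W *ᵥ v

theorem posOffConstants_of_posDef {P : Matrix n n ℝ} (hP : P.PosDef) :
    PosOffConstants (P - (∑ i, ∑ j, P i j)⁻¹ • (P * Jmat n * P)) := by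
  intro v q r hqr
  have : Nonempty n := ⟨q⟩
  have hone : 0 < 1 ⬝ᵥ P *ᵥ 1 := by
    simpa only [star_trivial] using hP.dotProduct_mulVec_pos (one_ne_zero : (1 : n → ℝ) ≠ 0)
  rw [sum_sum_eq_one_dotProduct_mulVec_one, sub_mulVec, smul_mulVec, dotProduct_sub,
    dotProduct_smul, dotProduct_mul_Jmat_mul_mulVec, smul_eq_mul, sub_pos,
    inv_mul_lt_iff₀ hone]
  exact dotProduct_mulVec_mul_lt_of_posDef hP (linearIndependent_one_of_apply_ne hqr)

theorem PosOffConstants.sum_transpose_mul_mul_pos {W : Matrix n n ℝ} (hW : PosOffConstants W)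
    {F : Matrix n m ℝ} {q r : n} (h : ∑ k, F q k ≠ ∑ k, F r k) :
    0 < ∑ k, ∑ l, (Fᵀ * W * F) k l := by
  rw [sum_sum_eq_one_dotProduct_mulVec_one, dotProduct_transpose_mul_mul_mulVec]
  refine hW (q := q) (r := r) ?_
  simpa only [mulVec, dotProduct_one] using h

theorem PosOffConstants.trace_transpose_mul_mul_pos [Nonempty m] {W : Matrix n n ℝ}
    (hW : PosOffConstants W) {F : Matrix n m ℝ} (h : ∀ k, ∃ q r, F q k ≠ F r k) :
    0 < trace (Fᵀ * W * F) := by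
  classical
  refine Finset.sum_pos (fun k _ => ?_) Finset.univ_nonempty
  obtain ⟨q, r, hqr⟩ := h k
  have hdiag := dotProduct_transpose_mul_mul_mulVec W F (Pi.single k 1)
  rw [single_one_dotProduct, mulVec_single_one, mulVec_single_one] at hdiag
  exact (hW hqr).trans_eq hdiag.symm

end Quadratic

section Centering

variable {n m : Type*} [Fintype m] [DecidableEq m]

theorem Bmat_transpose (m : Type*) [Fintype m] [DecidableEq m] : (Bmat m)ᵀ = Bmat m := by
  ext i j
  simp [Bmat, Jmat, one_apply, eq_comm]

theorem mul_Bmat_apply (F : Matrix n m ℝ) (q : n) (k : m) :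
    (F * Bmat m) q k = F q k - (Fintype.card m : ℝ)⁻¹ * ∑ l, F q l := by
  rw [Bmat, Matrix.mul_sub, Matrix.mul_one, Matrix.mul_smul]
  simp [Jmat, mul_apply]

theorem Bmat_mul_self (m : Type*) [Fintype m] [DecidableEq m] : Bmat m * Bmat m = Bmat m := by
  ext i j
  have : Nonempty m := ⟨i⟩
  rw [mul_Bmat_apply]
  simp [Bmat, Jmat, one_apply]

theorem trace_Bmat_mul_conj [Fintype n] (F : Matrix n m ℝ) (W : Matrix n n ℝ) :
    trace (Bmat m * (Fᵀ * W * F)) = trace ((F * Bmat m)ᵀ * W * (F * Bmat m)) := by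
  calc trace (Bmat m * (Fᵀ * W * F))
      = trace (Bmat m * Bmat m * (Fᵀ * W * F)) := by rw [Bmat_mul_self]
    _ = trace (Bmat m * (Fᵀ * W * F) * Bmat m) := (trace_mul_cycle _ _ _).symm
    _ = trace ((F * Bmat m)ᵀ * W * (F * Bmat m)) := by
        rw [transpose_mul, Bmat_transpose]
        simp only [Matrix.mul_assoc]

theorem map_mul_Bmat_apply_ne {N : Matrix n m ℕ} {q r : n}
    (h : ¬ ∑ l, N q l ≡ ∑ l, N r l [MOD Fintype.card m]) (k : m) :
    (N.map ((↑) : ℕ → ℝ) * Bmat m) q k ≠ (N.map ((↑) : ℕ → ℝ) * Bmat m) r k := by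
  intro heq
  have : Nonempty m := ⟨k⟩
  -- Equality says `card m * (N r k - N q k) = ∑ l, N r l - ∑ l, N q l`.
  refine h (Nat.modEq_iff_dvd.2 ⟨N r k - N q k, ?_⟩)
  rw [mul_Bmat_apply, mul_Bmat_apply] at heq
  simp only [map_apply] at heq
  field_simp at heq
  rify
  linarith

end Centering

section Neighbors

open SimpleGraph
open scoped Finset

instance (n : ℕ) : DecidableRel (pathGraph n).Adj := fun _ _ =>
  decidable_of_iff' _ pathGraph_adj

theorem degree_pathGraph_zero {n : ℕ} (hn : 2 ≤ n) : (pathGraph n).degree ⟨0, by omega⟩ = 1 := by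
  rw [degree_eq_one_iff_existsUnique_adj]
  refine ⟨⟨1, by omega⟩, ?_, ?_⟩ <;> simp [pathGraph_adj, Fin.ext_iff, eq_comm]

theorem degree_pathGraph_one {n : ℕ} (hn : 3 ≤ n) : (pathGraph n).degree ⟨1, by omega⟩ = 2 := by
  rw [← card_neighborFinset_eq_degree, Finset.card_eq_two]
  refine ⟨⟨0, by omega⟩, ⟨2, by omega⟩, by simp, ?_⟩
  ext i
  simp only [mem_neighborFinset, pathGraph_adj, Finset.mem_insert, Finset.mem_singleton,
    Fin.ext_iff]
  omega

theorem neighbor_iff_boxProd_adj {q r : Plot a b} :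
    Neighbor q r ↔ (pathGraph a □ pathGraph b).Adj q r := by
  simp only [Neighbor, boxProd_adj, pathGraph_adj]
  tauto

theorem card_neighbor (q : Plot a b) :
    #{r | Neighbor q r} = (pathGraph a).degree q.1 + (pathGraph b).degree q.2 := by
  rw [← degree_boxProd, ← card_neighborFinset_eq_degree]
  congr 1
  ext r
  simp [neighbor_iff_boxProd_adj]

/-- The matrix `F_s` over `ℕ`: how many neighbors of plot `q` receive treatment `k`. Natural
entries allow row sums to be compared modulo `t`. -/
def neighborCount (s : BlockArray a b t) : Matrix (Plot a b) (Fin t) ℕ :=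
  of fun q k => #{r | Neighbor q r ∧ s r = k}

theorem Fmat_eq_map_neighborCount (s : BlockArray a b t) : Fmat s = (neighborCount s).map (↑) := by
  ext q k
  simp [Fmat, Mmat, Tmat, neighborCount, mul_apply, ← ite_and, and_comm]

theorem sum_neighborCount (s : BlockArray a b t) (q : Plot a b) :
    ∑ k, neighborCount s q k = #{r | Neighbor q r} := by
  rw [Finset.card_eq_sum_card_fiberwise fun r _ => Finset.mem_univ (s r)]
  simp only [neighborCount, of_apply, Finset.filter_filter]

theorem exists_sum_neighborCount_eq_succ (ha : 0 < a) (hb : 3 ≤ b) (s : BlockArray a b t) :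
    ∃ q r, ∑ k, neighborCount s q k = ∑ k, neighborCount s r k + 1 := by
  refine ⟨(⟨0, ha⟩, ⟨1, by omega⟩), (⟨0, ha⟩, ⟨0, by omega⟩), ?_⟩
  simp only [sum_neighborCount, card_neighbor, degree_pathGraph_zero (by omega : 2 ≤ b),
    degree_pathGraph_one hb, add_assoc, Nat.reduceAdd]

end Neighbors

theorem cs11_pos_general (a b t : ℕ) (ha : 0 < a) (hb : 3 ≤ b) (ht : 2 ≤ t)
    (Sig : Matrix (Plot a b) (Plot a b) ℝ) (hSig : Sig.PosDef) (s : BlockArray a b t) :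
    0 < Matrix.trace (Bmat (Fin t) * ((Fmat s)ᵀ * Btilde Sig * Fmat s)) ∧
    0 < ∑ k : Fin t, ∑ l : Fin t, ((Fmat s)ᵀ * Btilde Sig * Fmat s) k l := by
  have hW : PosOffConstants (Btilde Sig) := posOffConstants_of_posDef hSig.inv
  obtain ⟨q, r, hqr⟩ := exists_sum_neighborCount_eq_succ ha hb s
  have : Nonempty (Fin t) := ⟨s q⟩
  rw [Fmat_eq_map_neighborCount]
  constructor
  · have hmod : ¬ ∑ k, neighborCount s r k ≡ ∑ k, neighborCount s q k
        [MOD Fintype.card (Fin t)] := by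
      rw [hqr, Nat.left_modEq_add_iff, Nat.dvd_one, Fintype.card_fin]
      omega
    rw [trace_Bmat_mul_conj]
    exact hW.trace_transpose_mul_mul_pos fun k => ⟨r, q, map_mul_Bmat_apply_ne hmod k⟩
  · refine hW.sum_transpose_mul_mul_pos (q := q) (r := r) ?_
    simp only [map_apply]
    norm_cast
    omega

/-- for every block array `s`, `c_{s11} = tr(B_t F_s'B̃F_s) > 0` and
`1_t' F_s'B̃F_s 1_t > 0`. -/
theorem cs11_pos (a b t : ℕ) (ha : 2 ≤ a) (hab : a ≤ b) (hb : 3 ≤ b) (ht : 2 ≤ t)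
    (Sig : Matrix (Plot a b) (Plot a b) ℝ) (hSig : Sig.PosDef)
    (s : BlockArray a b t) :
    0 < Matrix.trace (Bmat (Fin t) * ((Fmat s)ᵀ * Btilde Sig * Fmat s)) ∧
    0 < ∑ k : Fin t, ∑ l : Fin t, ((Fmat s)ᵀ * Btilde Sig * Fmat s) k l :=
  cs11_pos_general a b t (by omega) hb ht Sig hSig s

end TwoDim
end

section
/- Let y* be the maximum of q*_ξ over all measures ξ. A pseudo symmetric measure ξ is universally optimal if and only if q*_ξ = y*. -/
open Matrix

namespace TwoDim

variable {a b t : ℕ}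

/-!
Weighting the block arrays by a measure `η`, the block matrix with blocks `C_{η00}`, `C_{η01}`,
`C_{η10}`, `C_{η11}` is positive semidefinite, and the information matrix is its generalized Schur
complement: a symmetric matrix with zero row sums, dominated in the Loewner order by
`C_{η00} + C_{η01} X + Xᵀ C_{η10} + Xᵀ C_{η11} X` for every `X`. Taking `X = x B_t` and minimizing
the trace over the scalar `x` bounds the trace of the information matrix by `q*_η`. For a pseudo
symmetric measure `ξ` everything lives in the algebra spanned by `I` and `J`, and the information
matrix is exactly `(q*_ξ / (t - 1)) B_t`.

By concavity, averaging an information matrix over all relabelings of the treatments cannot decrease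
a criterion `Φ`, and the average is a multiple of `B_t` determined by its trace. Hence `Φ` at any
`η` is at most `Φ((q*_η / (t - 1)) B_t)`, so maximizing `q*` is sufficient. It is necessary because
the trace is itself a criterion, and symmetrizing a maximizer of `q*` gives a pseudo symmetric
measure with the same `q*`.
-/

open scoped BigOperators

section Centering

variable {n : Type*}

lemma isSymm_Jmat : (Jmat n).IsSymm := rfl

variable [Fintype n]

lemma Jmat_mul_Jmat : Jmat n * Jmat n = (Fintype.card n : ℝ) • Jmat n := by
  ext i j
  simp [Jmat, mul_apply]

lemma Jmat_mul_mul_Jmat (A : Matrix n n ℝ) :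
    Jmat n * A * Jmat n = (∑ i, ∑ j, A i j) • Jmat n := by
  ext i j
  simpa [Jmat, mul_apply] using Finset.sum_comm

lemma mul_Jmat_of_mulVec_one_eq_zero {m : Type*} {A : Matrix m n ℝ} (hA : A *ᵥ 1 = 0) :
    A * Jmat n = 0 := by
  ext i j
  simpa [Jmat, mul_apply, mulVec, dotProduct] using congrFun hA i

variable [DecidableEq n]

lemma isSymm_Bmat : (Bmat n).IsSymm :=
  isSymm_one.sub (isSymm_Jmat.smul _)

lemma Jmat_mul_Bmat [Nonempty n] : Jmat n * Bmat n = 0 := by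
  simp [Bmat, mul_sub, Jmat_mul_Jmat, smul_smul]

lemma Bmat_mul_Bmat : Bmat n * Bmat n = Bmat n := by
  have hJ : ((Fintype.card n : ℝ)⁻¹ • Jmat n) * ((Fintype.card n : ℝ)⁻¹ • Jmat n) =
      (Fintype.card n : ℝ)⁻¹ • Jmat n := by
    rw [smul_mul_smul_comm, Jmat_mul_Jmat, smul_smul]
    congr 1
    simpa using mul_self_mul_inv (Fintype.card n : ℝ)⁻¹
  exact IsIdempotentElem.one_sub hJ

lemma posSemidef_Bmat : (Bmat n).PosSemidef := by
  have h := posSemidef_conjTranspose_mul_self (Bmat n)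
  rwa [conjTranspose_eq_transpose_of_trivial, isSymm_Bmat.eq, Bmat_mul_Bmat] at h

lemma trace_Bmat [Nonempty n] : (Bmat n).trace = Fintype.card n - 1 := by
  simp [Bmat, Jmat, trace]

lemma mul_Bmat_of_mulVec_one_eq_zero {m : Type*} {A : Matrix m n ℝ} (hA : A *ᵥ 1 = 0) :
    A * Bmat n = A := by
  simp [Bmat, Matrix.mul_sub, mul_Jmat_of_mulVec_one_eq_zero hA]

lemma trace_Bmat_mul_of_mulVec_one_eq_zero {A : Matrix n n ℝ} (hA : A *ᵥ 1 = 0) :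
    (Bmat n * A).trace = A.trace := by
  rw [trace_mul_comm, mul_Bmat_of_mulVec_one_eq_zero hA]

lemma Bmat_submatrix_perm (σ : Equiv.Perm n) : (Bmat n).submatrix σ σ = Bmat n := by
  ext i j
  simp [Bmat, Jmat, one_apply]

end Centering

section CompleteSymmetry

variable {A : Matrix (Fin t) (Fin t) ℝ}

lemma ComplSym.isSymm (hA : ComplSym A) : A.IsSymm := by
  obtain ⟨α, β, rfl⟩ := hA
  exact (isSymm_one.smul α).add (isSymm_Jmat.smul β)

variable [Nontrivial (Fin t)]

variable (t) in
lemma natCast_sub_one_pos : (0 : ℝ) < t - 1 := by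
  have : 1 < t := Fin.nontrivial_iff_two_le.mp ‹_›
  exact sub_pos.mpr (mod_cast this)

lemma ComplSym.mul_Bmat (hA : ComplSym A) :
    A * Bmat (Fin t) = ((Bmat (Fin t) * A).trace / (t - 1)) • Bmat (Fin t) := by
  rw [trace_mul_comm]
  obtain ⟨α, β, rfl⟩ := hA
  simp [add_mul, Jmat_mul_Bmat, trace_Bmat, (natCast_sub_one_pos t).ne']

lemma ComplSym.eq_smul_Bmat (hA : ComplSym A) (hA1 : A *ᵥ 1 = 0) :
    A = ((Bmat (Fin t) * A).trace / (t - 1)) • Bmat (Fin t) := by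
  rw [← hA.mul_Bmat, mul_Bmat_of_mulVec_one_eq_zero hA1]

lemma complSym_of_submatrix_perm_eq
    (hA : ∀ σ : Equiv.Perm (Fin t), A.submatrix σ σ = A) : ComplSym A := by
  have hinv (σ : Equiv.Perm (Fin t)) (i j) : A (σ i) (σ j) = A i j := congrFun₂ (hA σ) i j
  obtain ⟨k, l, hkl⟩ := exists_pair_ne (Fin t)
  have hdiag (i) : A i i = A k k := by simpa using hinv (Equiv.swap k i) k k
  have hoff (i j) (hij : i ≠ j) : A i j = A k l := by
    obtain ⟨σ, rfl, rfl⟩ := MulAction.is_two_pretransitive_iff.mp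
      (Equiv.Perm.isMultiplyPretransitive (Fin t) 2) hkl hij
    exact hinv σ k l
  refine ⟨A k k - A k l, A k l, ?_⟩
  ext i j
  obtain rfl | hij := eq_or_ne i j
  · simp [Jmat, hdiag]
  · simp [Jmat, hoff i j hij, hij]

end CompleteSymmetry

section PermutationAverage

variable {n : Type*} [Fintype n] (A : Matrix n n ℝ)

lemma trace_submatrix_perm (σ : Equiv.Perm n) : (A.submatrix σ σ).trace = A.trace :=
  Equiv.sum_comp σ A.diag

variable [DecidableEq n]

/-- The average of `A` over all simultaneous permutations of its rows and columns, used to replace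
an information matrix by a completely symmetric one. -/
noncomputable def permAvg : Matrix n n ℝ :=
  𝔼 σ : Equiv.Perm n, A.submatrix σ σ

lemma permAvg_apply (i j : n) : permAvg A i j = 𝔼 σ : Equiv.Perm n, A (σ i) (σ j) := by
  simpa [permAvg] using map_expect (entryLinearMap ℚ≥0 ℝ i j)
    (fun σ : Equiv.Perm n => A.submatrix σ σ) Finset.univ

lemma permAvg_submatrix_perm (τ : Equiv.Perm n) : (permAvg A).submatrix τ τ = permAvg A := by
  ext i j
  simp only [submatrix_apply, permAvg_apply]
  exact Fintype.expect_equiv (Equiv.mulRight τ) _ _ fun _ => rfl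

lemma trace_permAvg : (permAvg A).trace = A.trace := by
  rw [permAvg, ← traceLinearMap_apply n ℚ≥0, map_expect]
  simp [trace_submatrix_perm]

lemma Bmat_mul_permAvg : Bmat n * permAvg A = permAvg (Bmat n * A) := by
  rw [permAvg, Finset.mul_expect, permAvg]
  refine Finset.expect_congr rfl fun σ _ => ?_
  nth_rw 1 [← Bmat_submatrix_perm σ, submatrix_mul_equiv]

variable {A} in
lemma permAvg_mulVec_one (hA : A *ᵥ 1 = 0) : permAvg A *ᵥ 1 = 0 := by
  ext i
  have hrow (k : n) : ∑ j, A k j = 0 := by simpa [mulVec, dotProduct] using congrFun hA k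
  simp only [mulVec, dotProduct, permAvg_apply, Pi.one_apply, mul_one, Pi.zero_apply]
  rw [← Finset.expect_sum_comm]
  exact Finset.expect_eq_zero fun σ _ => (Equiv.sum_comp σ (A (σ i))).trans (hrow _)

lemma complSym_permAvg [Nontrivial (Fin t)] (A : Matrix (Fin t) (Fin t) ℝ) :
    ComplSym (permAvg A) :=
  complSym_of_submatrix_perm_eq (permAvg_submatrix_perm A)

end PermutationAverage

section Criteria

lemma concaveOn_expect_le_map_expect {ι E : Type*} [Fintype ι] [Nonempty ι] [AddCommGroup E]
    [Module ℝ E] [Module ℚ≥0 E] {S : Set E} {f : E → ℝ} (hf : ConcaveOn ℝ S f) {p : ι → E}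
    (hp : ∀ i, p i ∈ S) : 𝔼 i, f (p i) ≤ f (𝔼 i, p i) := by
  have h := hf.le_map_sum (t := Finset.univ) (w := fun _ : ι => (Fintype.card ι : ℝ)⁻¹) (p := p)
    (fun _ _ => by positivity) (by simp) fun i _ => hp i
  have hE : 𝔼 i, p i = ∑ i, (Fintype.card ι : ℝ)⁻¹ • p i := by
    rw [Finset.expect_univ, ← Finset.smul_sum, ← NNRat.cast_smul_eq_nnqsmul ℝ]
    simp
  simpa [hE, Fintype.expect_eq_sum_div_card, ← Finset.mul_sum, div_eq_inv_mul] using h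

lemma goodPhi_trace : GoodPhi t trace := by
  refine ⟨fun A B _ _ α _ _ => by simp, fun A B _ _ h => ?_, fun σ C => trace_submatrix_perm C σ⟩
  simpa [trace_sub] using h.trace_nonneg

namespace GoodPhi

variable {Φ : Matrix (Fin t) (Fin t) ℝ → ℝ} (hΦ : GoodPhi t Φ)
include hΦ

lemma concaveOn : ConcaveOn ℝ {A : Matrix (Fin t) (Fin t) ℝ | A.IsSymm} Φ := by
  refine ⟨fun A hA B hB α β _ _ _ => (hA.smul α).add (hB.smul β), ?_⟩
  intro A hA B hB α β hα hβ hαβ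
  obtain rfl : β = 1 - α := eq_sub_of_add_eq' hαβ
  exact hΦ.1 A B hA hB α hα (sub_nonneg.mp hβ)

lemma le_permAvg {A : Matrix (Fin t) (Fin t) ℝ} (hA : A.IsSymm) : Φ A ≤ Φ (permAvg A) := by
  simpa [hΦ.2.2, permAvg] using concaveOn_expect_le_map_expect hΦ.concaveOn
    (p := fun σ : Equiv.Perm (Fin t) => A.submatrix σ σ) fun σ => hA.submatrix σ

lemma monotone_smul_Bmat : Monotone fun x : ℝ => Φ (x • Bmat (Fin t)) := by
  intro x y hxy
  refine hΦ.2.1 _ _ (isSymm_Bmat.smul x) (isSymm_Bmat.smul y) ?_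
  rw [← sub_smul]
  exact posSemidef_Bmat.smul (sub_nonneg.mpr hxy)

lemma le_smul_Bmat [Nontrivial (Fin t)] {A : Matrix (Fin t) (Fin t) ℝ} (hA : A.IsSymm)
    (hA1 : A *ᵥ 1 = 0) {y : ℝ} (hy : A.trace ≤ y) : Φ A ≤ Φ ((y / (t - 1)) • Bmat (Fin t)) :=
  calc Φ A ≤ Φ (permAvg A) := hΦ.le_permAvg hA
    _ = Φ ((A.trace / (t - 1)) • Bmat (Fin t)) := by
      have hsum := permAvg_mulVec_one hA1
      rw [(complSym_permAvg A).eq_smul_Bmat hsum, trace_Bmat_mul_of_mulVec_one_eq_zero hsum,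
        trace_permAvg]
    _ ≤ Φ ((y / (t - 1)) • Bmat (Fin t)) :=
      hΦ.monotone_smul_Bmat (div_le_div_of_nonneg_right hy (natCast_sub_one_pos t).le)

end GoodPhi

end Criteria

section SchurComplement

variable {m n : Type*} {A : Matrix m m ℝ} {B : Matrix m n ℝ} {D H : Matrix n n ℝ}

lemma isSymm_of_fromBlocks_posSemidef (hP : (fromBlocks A B Bᵀ D).PosSemidef) :
    A.IsSymm ∧ D.IsSymm := by
  obtain ⟨hA, -, -, hD⟩ := isHermitian_fromBlocks_iff.mp hP.isHermitian
  exact ⟨by simpa using hA, by simpa using hD⟩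

lemma mulVec_eq_zero_of_fromBlocks_posSemidef [Finite m] [Fintype n]
    (hP : (fromBlocks A B Bᵀ D).PosSemidef) {v : n → ℝ} (hv : D *ᵥ v = 0) : B *ᵥ v = 0 := by
  have := Fintype.ofFinite m
  have hker : fromBlocks A B Bᵀ D *ᵥ Sum.elim 0 v = 0 := by
    rw [← hP.dotProduct_mulVec_zero_iff, fromBlocks_mulVec]
    simp [hv]
  rw [fromBlocks_mulVec] at hker
  simpa using congrArg (· ∘ Sum.inl) hker

lemma transpose_mulVec_eq_zero_of_fromBlocks_posSemidef [Fintype m] [Finite n]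
    (hP : (fromBlocks A B Bᵀ D).PosSemidef) {v : m → ℝ} (hv : A *ᵥ v = 0) : Bᵀ *ᵥ v = 0 := by
  have hswap : (fromBlocks D Bᵀ Bᵀᵀ A).PosSemidef := by
    simpa using hP.submatrix Sum.swap
  exact mulVec_eq_zero_of_fromBlocks_posSemidef hswap hv

section

variable [Finite m] [Fintype n]

lemma mul_genInv_mul_of_fromBlocks_posSemidef (hP : (fromBlocks A B Bᵀ D).PosSemidef)
    (hH : D * H * D = D) : B * H * D = B := by
  classical
  have hker : B * (H * D - 1) = 0 := by
    refine ext_col fun j => mulVec_eq_zero_of_fromBlocks_posSemidef hP (v := (H * D - 1).col j) ?_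
    suffices D * (H * D - 1) = 0 from funext fun i => congrFun₂ this i j
    rw [Matrix.mul_sub, ← Matrix.mul_assoc, hH, Matrix.mul_one, sub_self]
  rwa [Matrix.mul_sub, ← Matrix.mul_assoc, Matrix.mul_one, sub_eq_zero] at hker

lemma isSymm_mul_genInv_mul_transpose (hP : (fromBlocks A B Bᵀ D).PosSemidef)
    (hH : D * H * D = D) : (B * H * Bᵀ).IsSymm := by
  have hB := congrArg transpose (mul_genInv_mul_of_fromBlocks_posSemidef hP hH)
  have hD := (isSymm_of_fromBlocks_posSemidef hP).2
  simp only [transpose_mul, hD.eq] at hB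
  have key : B * H * Bᵀ = B * H * D * Hᵀ * Bᵀ := by
    rw [Matrix.mul_assoc _ Hᵀ, Matrix.mul_assoc _ D, hB]
  rw [IsSymm, key]
  simp only [transpose_mul, transpose_transpose, hD.eq, Matrix.mul_assoc]

lemma isSymm_schurComplement (hP : (fromBlocks A B Bᵀ D).PosSemidef) (hH : D * H * D = D) :
    (A - B * H * Bᵀ).IsSymm :=
  (isSymm_of_fromBlocks_posSemidef hP).1.sub (isSymm_mul_genInv_mul_transpose hP hH)

lemma schurComplement_add_eq_quadratic (hP : (fromBlocks A B Bᵀ D).PosSemidef)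
    (hH : D * H * D = D) (X : Matrix n m ℝ) :
    A - B * H * Bᵀ + (X + Hᵀ * Bᵀ)ᵀ * D * (X + Hᵀ * Bᵀ) =
      A + B * X + (B * X)ᵀ + Xᵀ * D * X := by
  have hBHD := mul_genInv_mul_of_fromBlocks_posSemidef hP hH
  have hD := (isSymm_of_fromBlocks_posSemidef hP).2
  have hDHB : D * (Hᵀ * Bᵀ) = Bᵀ := by simpa [hD.eq] using congrArg transpose hBHD
  have hS : B * (Hᵀ * Bᵀ) = B * H * Bᵀ := by
    simpa [Matrix.mul_assoc] using (isSymm_mul_genInv_mul_transpose hP hH).eq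
  simp only [transpose_add, transpose_mul, transpose_transpose, Matrix.add_mul, hBHD,
    Matrix.mul_add, Matrix.mul_assoc _ D, hDHB, hS]
  abel

lemma posSemidef_quadratic_sub_schurComplement (hP : (fromBlocks A B Bᵀ D).PosSemidef)
    (hH : D * H * D = D) (X : Matrix n m ℝ) :
    (A + B * X + (B * X)ᵀ + Xᵀ * D * X - (A - B * H * Bᵀ)).PosSemidef := by
  have hD : D.PosSemidef := hP.submatrix Sum.inr
  rw [← schurComplement_add_eq_quadratic hP hH, add_sub_cancel_left]
  simpa using hD.conjTranspose_mul_mul_same (X + Hᵀ * Bᵀ)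

end

variable [Fintype n]

lemma schurComplement_mulVec_eq_zero [Fintype m] (hP : (fromBlocks A B Bᵀ D).PosSemidef)
    {v : m → ℝ} (hv : A *ᵥ v = 0) : (A - B * H * Bᵀ) *ᵥ v = 0 := by
  rw [sub_mulVec, hv, ← mulVec_mulVec, transpose_mulVec_eq_zero_of_fromBlocks_posSemidef hP hv,
    mulVec_zero, sub_zero]

section TraceBound

variable [DecidableEq n] {A B : Matrix n n ℝ}

lemma trace_schurComplement_le_quadratic (hP : (fromBlocks A B Bᵀ D).PosSemidef)
    (hA : A *ᵥ 1 = 0) (hH : D * H * D = D) (x : ℝ) :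
    (A - B * H * Bᵀ).trace ≤
      (Bmat n * A).trace + 2 * (Bmat n * B).trace * x + (Bmat n * D).trace * x ^ 2 := by
  have h := (posSemidef_quadratic_sub_schurComplement hP hH (x • Bmat n)).trace_nonneg
  have hPDP : (Bmat n * D * Bmat n).trace = (Bmat n * D).trace := by
    rw [trace_mul_comm, ← Matrix.mul_assoc, Bmat_mul_Bmat]
  have hquad : (A + B * (x • Bmat n) + (B * (x • Bmat n))ᵀ +
      (x • Bmat n)ᵀ * D * (x • Bmat n)).trace =
      (Bmat n * A).trace + 2 * (Bmat n * B).trace * x + (Bmat n * D).trace * x ^ 2 := by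
    simp only [trace_add, trace_transpose, transpose_smul, isSymm_Bmat.eq, Matrix.mul_smul,
      Matrix.smul_mul, trace_smul, smul_eq_mul, hPDP, trace_mul_comm B,
      trace_Bmat_mul_of_mulVec_one_eq_zero hA]
    ring
  rwa [trace_sub, hquad, sub_nonneg] at h

lemma trace_schurComplement_le (hP : (fromBlocks A B Bᵀ D).PosSemidef)
    (hA : A *ᵥ 1 = 0) (hH : D * H * D = D) :
    (A - B * H * Bᵀ).trace ≤
      (Bmat n * A).trace - (Bmat n * B).trace ^ 2 / (Bmat n * D).trace := by
  have hle := trace_schurComplement_le_quadratic hP hA hH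
  obtain h0 | h0 := eq_or_ne (Bmat n * D).trace 0
  -- Since `_ / 0 = 0`, the bound is the value of the quadratic at zero.
  · simpa [h0] using hle 0
  · refine (hle (-(Bmat n * B).trace / (Bmat n * D).trace)).trans_eq ?_
    field_simp
    ring

end TraceBound

lemma mul_genInv_mul_eq_smul_of_isIdempotentElem {B P : Matrix n n ℝ} {γ δ : ℝ}
    (hPP : IsIdempotentElem P) (hB : B = γ • P) (hD : D * P = δ • P) (hBHD : B * H * D = B) :
    B * H * B = (γ ^ 2 / δ) • P := by
  have hBHP : B = δ • (B * H * P) :=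
    calc B = B * P := by rw [hB, Matrix.smul_mul, hPP.eq]
      _ = B * H * (D * P) := by rw [← Matrix.mul_assoc, hBHD]
      _ = δ • (B * H * P) := by rw [hD, Matrix.mul_smul]
  obtain rfl | hδ := eq_or_ne δ 0
  · rw [zero_smul] at hBHP
    simp [hBHP]
  · calc B * H * B = γ • (B * H * P) := by rw [← Matrix.mul_smul, ← hB]
      _ = γ • δ⁻¹ • B := by rw [(eq_inv_smul_iff₀ hδ).mpr hBHP.symm]
      _ = (γ ^ 2 / δ) • P := by rw [hB]; module

lemma schurComplement_eq_smul_Bmat_of_complSym [Nontrivial (Fin t)]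
    {A B D H : Matrix (Fin t) (Fin t) ℝ} (hP : (fromBlocks A B Bᵀ D).PosSemidef)
    (hA1 : A *ᵥ 1 = 0) (hH : D * H * D = D)
    (hA : ComplSym A) (hB : ComplSym B) (hD : ComplSym D) :
    A - B * H * Bᵀ =
      (((Bmat (Fin t) * A).trace - (Bmat (Fin t) * B).trace ^ 2 / (Bmat (Fin t) * D).trace) /
        (t - 1)) • Bmat (Fin t) := by
  have ht := (natCast_sub_one_pos t).ne'
  have hB1 := transpose_mulVec_eq_zero_of_fromBlocks_posSemidef hP hA1
  rw [hB.isSymm.eq] at hB1 ⊢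
  have hBHB := mul_genInv_mul_eq_smul_of_isIdempotentElem Bmat_mul_Bmat (hB.eq_smul_Bmat hB1)
    hD.mul_Bmat (mul_genInv_mul_of_fromBlocks_posSemidef hP hH)
  nth_rw 1 [hBHB, hA.eq_smul_Bmat hA1, ← sub_smul]
  congr 1
  field_simp

end SchurComplement

section GeneralizedInverse

lemma exists_linearMap_comp_comp_eq {K V V' : Type*} [DivisionRing K] [AddCommGroup V] [Module K V]
    [AddCommGroup V'] [Module K V'] (f : V →ₗ[K] V') : ∃ g : V' →ₗ[K] V, f ∘ₗ g ∘ₗ f = f := by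
  obtain ⟨g₀, hg₀⟩ := f.rangeRestrict.exists_rightInverse_of_surjective f.range_rangeRestrict
  obtain ⟨g, hg⟩ := g₀.exists_extend
  refine ⟨g, LinearMap.ext fun v => ?_⟩
  have h₁ : g (f v) = g₀ (f.rangeRestrict v) := LinearMap.congr_fun hg (f.rangeRestrict v)
  have h₂ := congrArg Subtype.val (LinearMap.congr_fun hg₀ (f.rangeRestrict v))
  simpa [h₁] using h₂

lemma exists_isGenInv (A : Matrix (Fin t) (Fin t) ℝ) : ∃ G, IsGenInv A G := by
  obtain ⟨g, hg⟩ := exists_linearMap_comp_comp_eq (toLin' A)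
  refine ⟨LinearMap.toMatrix' g, toLin'.injective ?_⟩
  simpa [LinearMap.comp_assoc] using hg

end GeneralizedInverse

section InformationMatrix

variable {W : Matrix (Plot a b) (Plot a b) ℝ} {ξ : BlockArray a b t → ℝ}

lemma cm00_eq_trace : cm00 W ξ = (Bmat (Fin t) * Cm00 W ξ).trace := by
  simp [cm00, cs00, Cm00, Finset.mul_sum, trace_sum]

lemma cm01_eq_trace : cm01 W ξ = (Bmat (Fin t) * Cm01 W ξ).trace := by
  simp [cm01, cs01, Cm01, Finset.mul_sum, trace_sum]

lemma cm11_eq_trace : cm11 W ξ = (Bmat (Fin t) * Cm11 W ξ).trace := by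
  simp [cm11, cs11, Cm11, Finset.mul_sum, trace_sum]

lemma qstar_eq_trace : qstar W ξ = (Bmat (Fin t) * Cm00 W ξ).trace -
    (Bmat (Fin t) * Cm01 W ξ).trace ^ 2 / (Bmat (Fin t) * Cm11 W ξ).trace := by
  rw [qstar, cm00_eq_trace, cm01_eq_trace, cm11_eq_trace]

lemma Tmat_mulVec_one (s : BlockArray a b t) : Tmat s *ᵥ 1 = 1 := by
  ext q
  simp [Tmat, mulVec, dotProduct]

lemma Cm00_mulVec_one (hW1 : W *ᵥ 1 = 0) : Cm00 W ξ *ᵥ 1 = 0 := by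
  have h (s : BlockArray a b t) : Cs00 W s *ᵥ 1 = 0 := by
    rw [Cs00, ← mulVec_mulVec, Tmat_mulVec_one, ← mulVec_mulVec, hW1, mulVec_zero]
  simp [Cm00, sum_mulVec, smul_mulVec, h]

lemma posSemidef_fromBlocks_Cs (hW : W.PosSemidef) (s : BlockArray a b t) :
    (fromBlocks (Cs00 W s) (Cs01 W s) (Cs01 W s)ᵀ (Cs11 W s)).PosSemidef := by
  have hWt : W.IsSymm := by simpa using hW.isHermitian
  convert hW.conjTranspose_mul_mul_same (fromCols (Tmat s) (Fmat s)) using 1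
  rw [conjTranspose_eq_transpose_of_trivial, transpose_fromCols, fromRows_mul,
    fromRows_mul_fromCols]
  simp only [Cs00, Cs01, Cs11, transpose_mul, transpose_transpose, hWt.eq, Matrix.mul_assoc]

lemma posSemidef_fromBlocks_Cm (hW : W.PosSemidef) (hξ : ∀ s, 0 ≤ ξ s) :
    (fromBlocks (Cm00 W ξ) (Cm01 W ξ) (Cm01 W ξ)ᵀ (Cm11 W ξ)).PosSemidef := by
  have hsum : fromBlocks (Cm00 W ξ) (Cm01 W ξ) (Cm01 W ξ)ᵀ (Cm11 W ξ) =
      ∑ s, ξ s • fromBlocks (Cs00 W s) (Cs01 W s) (Cs01 W s)ᵀ (Cs11 W s) := by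
    ext (i | i) (j | j) <;> simp [Cm00, Cm01, Cm11, Matrix.sum_apply]
  rw [hsum]
  exact posSemidef_sum _ fun s _ => (posSemidef_fromBlocks_Cs hW s).smul (hξ s)

variable {G : Matrix (Fin t) (Fin t) ℝ} (hW : W.PosSemidef) (hξ : ∀ s, 0 ≤ ξ s)
  (hG : IsGenInv (Cm11 W ξ) G)
include hW hξ

lemma InfoMat_mulVec_one (hW1 : W *ᵥ 1 = 0) : InfoMat W ξ G *ᵥ 1 = 0 :=
  schurComplement_mulVec_eq_zero (posSemidef_fromBlocks_Cm hW hξ) (Cm00_mulVec_one hW1)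

include hG

lemma isSymm_InfoMat : (InfoMat W ξ G).IsSymm :=
  isSymm_schurComplement (posSemidef_fromBlocks_Cm hW hξ) hG

lemma trace_InfoMat_le_qstar (hW1 : W *ᵥ 1 = 0) : (InfoMat W ξ G).trace ≤ qstar W ξ := by
  rw [qstar_eq_trace]
  exact trace_schurComplement_le (posSemidef_fromBlocks_Cm hW hξ) (Cm00_mulVec_one hW1) hG

variable [Nontrivial (Fin t)] (hps : PseudoSym W ξ)
include hps

lemma PseudoSym.InfoMat_eq_smul_Bmat (hW1 : W *ᵥ 1 = 0) :
    InfoMat W ξ G = (qstar W ξ / (t - 1)) • Bmat (Fin t) := by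
  rw [qstar_eq_trace]
  exact schurComplement_eq_smul_Bmat_of_complSym (posSemidef_fromBlocks_Cm hW hξ)
    (Cm00_mulVec_one hW1) hG hps.1 hps.2.1 hps.2.2

lemma PseudoSym.trace_InfoMat (hW1 : W *ᵥ 1 = 0) : (InfoMat W ξ G).trace = qstar W ξ := by
  rw [hps.InfoMat_eq_smul_Bmat hW hξ hG hW1, trace_smul, trace_Bmat, Fintype.card_fin,
    smul_eq_mul, div_mul_cancel₀ _ (natCast_sub_one_pos t).ne']

end InformationMatrix

section Symmetrization

/-- The average of a measure over all relabelings of the treatments, a symmetric measure with the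
same value of `q*`. -/
noncomputable def symmetrize (ξ : BlockArray a b t → ℝ) (s : BlockArray a b t) : ℝ :=
  𝔼 σ : Equiv.Perm (Fin t), ξ (σ ∘ s)

variable {W : Matrix (Plot a b) (Plot a b) ℝ} {ξ : BlockArray a b t → ℝ}

lemma sum_symmetrize_mul (ξ f : BlockArray a b t → ℝ) :
    ∑ s, symmetrize ξ s * f s = 𝔼 σ : Equiv.Perm (Fin t), ∑ s, ξ s * f (σ.symm ∘ s) := by
  simp only [symmetrize, Finset.expect_mul]
  rw [← Finset.expect_sum_comm]
  refine Finset.expect_congr rfl fun σ _ => ?_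
  refine Fintype.sum_equiv (Equiv.arrowCongr (Equiv.refl _) σ) _ _ fun s => ?_
  have hs : σ.symm ∘ σ ∘ s = s := by simp [← Function.comp_assoc]
  exact congrArg (ξ (σ ∘ s) * f ·) hs.symm

lemma IsMeasure.symmetrize (hξ : IsMeasure ξ) : IsMeasure (symmetrize ξ) := by
  refine ⟨fun s => Finset.expect_nonneg fun σ _ => hξ.1 _, ?_⟩
  simpa [hξ.2] using sum_symmetrize_mul ξ fun _ => (1 : ℝ)

lemma sum_symmetrize_smul_eq_permAvg {C : BlockArray a b t → Matrix (Fin t) (Fin t) ℝ}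
    (hC : ∀ (σ : Equiv.Perm (Fin t)) s, C (σ.symm ∘ s) = (C s).submatrix σ σ) :
    ∑ s, symmetrize ξ s • C s = permAvg (∑ s, ξ s • C s) := by
  ext i j
  have h := sum_symmetrize_mul ξ fun s => C s i j
  simpa [permAvg_apply, Matrix.sum_apply, hC] using h

lemma Tmat_symm_comp (σ : Equiv.Perm (Fin t)) (s : BlockArray a b t) :
    Tmat (σ.symm ∘ s) = (Tmat s).submatrix id σ := by
  ext q k
  simp [Tmat, Equiv.symm_apply_eq]

lemma Fmat_symm_comp (σ : Equiv.Perm (Fin t)) (s : BlockArray a b t) :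
    Fmat (σ.symm ∘ s) = (Fmat s).submatrix id σ := by
  rw [Fmat, Tmat_symm_comp]
  rfl

lemma Cm00_symmetrize : Cm00 W (symmetrize ξ) = permAvg (Cm00 W ξ) :=
  sum_symmetrize_smul_eq_permAvg fun σ s => by rw [Cs00, Tmat_symm_comp]; rfl

lemma Cm01_symmetrize : Cm01 W (symmetrize ξ) = permAvg (Cm01 W ξ) :=
  sum_symmetrize_smul_eq_permAvg fun σ s => by rw [Cs01, Tmat_symm_comp, Fmat_symm_comp]; rfl

lemma Cm11_symmetrize : Cm11 W (symmetrize ξ) = permAvg (Cm11 W ξ) :=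
  sum_symmetrize_smul_eq_permAvg fun σ s => by rw [Cs11, Fmat_symm_comp]; rfl

lemma pseudoSym_symmetrize [Nontrivial (Fin t)] (W : Matrix (Plot a b) (Plot a b) ℝ)
    (ξ : BlockArray a b t → ℝ) : PseudoSym W (symmetrize ξ) := by
  rw [PseudoSym, Cm00_symmetrize, Cm01_symmetrize, Cm11_symmetrize]
  exact ⟨complSym_permAvg _, complSym_permAvg _, complSym_permAvg _⟩

lemma qstar_symmetrize (W : Matrix (Plot a b) (Plot a b) ℝ) (ξ : BlockArray a b t → ℝ) :
    qstar W (symmetrize ξ) = qstar W ξ := by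
  simp only [qstar_eq_trace, Cm00_symmetrize, Cm01_symmetrize, Cm11_symmetrize, Bmat_mul_permAvg,
    trace_permAvg]

end Symmetrization

section Optimality

variable {W : Matrix (Plot a b) (Plot a b) ℝ} {ξ : BlockArray a b t → ℝ} [Nontrivial (Fin t)]
  (hW : W.PosSemidef) (hW1 : W *ᵥ 1 = 0) (hξ : IsMeasure ξ) (hps : PseudoSym W ξ)
include hW hW1 hξ hps

lemma UnivOptimal.qstar_le (hopt : UnivOptimal W ξ) {η : BlockArray a b t → ℝ}
    (hη : IsMeasure η) : qstar W η ≤ qstar W ξ := by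
  have hη' := hη.symmetrize
  have hps' := pseudoSym_symmetrize W η
  obtain ⟨G, hG⟩ := exists_isGenInv (Cm11 W ξ)
  obtain ⟨H, hH⟩ := exists_isGenInv (Cm11 W (symmetrize η))
  calc qstar W η = qstar W (symmetrize η) := (qstar_symmetrize W η).symm
    _ = (InfoMat W (symmetrize η) H).trace := (hps'.trace_InfoMat hW hη'.1 hH hW1).symm
    _ ≤ (InfoMat W ξ G).trace := hopt _ hη' G H hG hH trace goodPhi_trace
    _ = qstar W ξ := hps.trace_InfoMat hW hξ.1 hG hW1

lemma PseudoSym.univOptimal (hmax : ∀ η : BlockArray a b t → ℝ, IsMeasure η →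
    qstar W η ≤ qstar W ξ) : UnivOptimal W ξ := by
  intro η hη G H hG hH Φ hΦ
  rw [hps.InfoMat_eq_smul_Bmat hW hξ.1 hG hW1]
  exact hΦ.le_smul_Bmat (isSymm_InfoMat hW hη.1 hH) (InfoMat_mulVec_one hW hη.1 hW1)
    ((trace_InfoMat_le_qstar hW hη.1 hH hW1).trans (hmax η hη))

end Optimality

section Btilde

lemma sub_smul_mul_Jmat_mul_eq_transpose_mul_mul {n : Type*} [Fintype n] [DecidableEq n]
    {S : Matrix n n ℝ} (hS : S.IsSymm) {x : ℝ} (hx : ∑ i, ∑ j, S i j = x) :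
    S - x⁻¹ • (S * Jmat n * S) =
      (1 - x⁻¹ • (Jmat n * S))ᵀ * S * (1 - x⁻¹ • (Jmat n * S)) := by
  have hSJSJS : S * Jmat n * S * Jmat n * S = x • (S * Jmat n * S) :=
    calc S * Jmat n * S * Jmat n * S = S * (Jmat n * S * Jmat n) * S := by
          simp only [Matrix.mul_assoc]
      _ = x • (S * Jmat n * S) := by
          rw [Jmat_mul_mul_Jmat, hx, Matrix.mul_smul, Matrix.smul_mul]
  have hxx : x⁻¹ * (x⁻¹ * x) = x⁻¹ := by
    simpa [mul_assoc] using mul_self_mul_inv x⁻¹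
  simp only [transpose_sub, transpose_one, transpose_smul, transpose_mul, hS.eq, isSymm_Jmat.eq,
    Matrix.sub_mul, Matrix.mul_sub, Matrix.one_mul, Matrix.mul_one, Matrix.smul_mul,
    Matrix.mul_smul, ← Matrix.mul_assoc, hSJSJS, smul_smul, smul_sub, hxx, sub_self, sub_zero]

variable {Sig : Matrix (Plot a b) (Plot a b) ℝ}

lemma posSemidef_Btilde (hSig : Sig.PosSemidef) : (Btilde Sig).PosSemidef := by
  have hS := hSig.inv
  rw [Btilde, sub_smul_mul_Jmat_mul_eq_transpose_mul_mul (by simpa using hS.isHermitian) rfl,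
    ← conjTranspose_eq_transpose_of_trivial]
  exact hS.conjTranspose_mul_mul_same _

lemma Btilde_mulVec_one (hSig : Sig.PosDef) : Btilde Sig *ᵥ 1 = 0 := by
  obtain hempty | hne := isEmpty_or_nonempty (Plot a b)
  · exact Subsingleton.elim _ _
  have hpos : 0 < ∑ i, ∑ j, Sig⁻¹ i j := by
    have h1 : (1 : Plot a b → ℝ) ≠ 0 := one_ne_zero
    simpa [mulVec, dotProduct] using hSig.inv.dotProduct_mulVec_pos h1
  have hJ : Jmat (Plot a b) *ᵥ (Sig⁻¹ *ᵥ 1) = (∑ i, ∑ j, Sig⁻¹ i j) • 1 := by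
    ext
    simp [Jmat, mulVec, dotProduct]
  rw [Btilde, sub_mulVec, smul_mulVec, ← mulVec_mulVec, ← mulVec_mulVec, hJ, mulVec_smul,
    inv_smul_smul₀ hpos.ne', sub_self]

end Btilde

theorem pseudoSym_univOptimal_iff_qstar_eq_max_general (ht : 2 ≤ t)
    {W : Matrix (Plot a b) (Plot a b) ℝ} (hW : W.PosSemidef) (hW1 : W *ᵥ 1 = 0) {ystar : ℝ}
    (hy : IsGreatest {y : ℝ | ∃ η : BlockArray a b t → ℝ, IsMeasure η ∧ qstar W η = y} ystar)
    {ξ : BlockArray a b t → ℝ} (hξ : IsMeasure ξ) (hps : PseudoSym W ξ) :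
    UnivOptimal W ξ ↔ qstar W ξ = ystar := by
  have : Nontrivial (Fin t) := Fin.nontrivial_iff_two_le.mpr ht
  constructor
  · intro hopt
    obtain ⟨η, hη, rfl⟩ := hy.1
    exact le_antisymm (hy.2 ⟨ξ, hξ, rfl⟩) (hopt.qstar_le hW hW1 hξ hps hη)
  · rintro rfl
    exact hps.univOptimal hW hW1 hξ fun η hη => hy.2 ⟨η, hη, rfl⟩

/-- with `y*` the maximum of `q*` over all measures, a pseudo symmetric
measure is universally optimal iff `q*_ξ = y*`. -/
theorem pseudoSym_univOptimal_iff_qstar_eq_max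
    (a b t : ℕ) (ha : 2 ≤ a) (hab : a ≤ b) (hb : 3 ≤ b) (ht : 2 ≤ t)
    (Sig : Matrix (Plot a b) (Plot a b) ℝ) (hSig : Sig.PosDef)
    (ystar : ℝ)
    (hy : IsGreatest {y : ℝ | ∃ η : BlockArray a b t → ℝ,
            IsMeasure η ∧ qstar (Btilde Sig) η = y} ystar)
    (ξ : BlockArray a b t → ℝ) (hξ : IsMeasure ξ) (hps : PseudoSym (Btilde Sig) ξ) :
    UnivOptimal (Btilde Sig) ξ ↔ qstar (Btilde Sig) ξ = ystar :=
  pseudoSym_univOptimal_iff_qstar_eq_max_general ht (posSemidef_Btilde hSig.posSemidef)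
    (Btilde_mulVec_one hSig) hy hξ hps

end TwoDim
end
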